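/- Let W be a recurrent infinite word over a finite alphabet whose complexity function has minimal growth, i.e. there exists N such that T_W(k+1) = T_W(k) + 1 for all k ≥ N. Then W is uniformly recurrent. -/

import Mathlib

/-- The factor of the infinite word `W` of length `n` starting at position `i`. -/
def factorAt {A : Type*} (W : ℕ → A) (i n : ℕ) : List A :=
  (List.range n).map (fun j => W (i + j))

/-- `u` is a factor (subword) of the infinite word `W`. -/
def IsFactor {A : Type*} (W : ℕ → A) (u : List A) : Prop :=
  ∃ i, u = factorAt W i u.length

/-- The complexity function: the number of distinct factors of `W` of length `n`. -/
noncomputable def complexity {A : Type*} (W : ℕ → A) (n : ℕ) : ℕ :=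
  Set.ncard {u : List A | u.length = n ∧ IsFactor W u}

/-- `W` is recurrent: every factor occurs at infinitely many positions. -/
def Recurrent {A : Type*} (W : ℕ → A) : Prop :=
  ∀ u : List A, IsFactor W u → {i : ℕ | factorAt W i u.length = u}.Infinite

/-- `W` is uniformly recurrent: it is recurrent, and for every factor `v`
there is `N` such that every factor of `W` of length at least `N` contains
`v` as a factor. -/
def UniformlyRecurrent {A : Type*} (W : ℕ → A) : Prop :=
  Recurrent W ∧ ∀ v : List A, IsFactor W v →
    ∃ N : ℕ, ∀ w : List A, IsFactor W w → N ≤ w.length → v <:+: w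

theorem fa_length {A : Type*} (W : ℕ → A) (i n : ℕ) : (factorAt W i n).length = n := by
  simp [factorAt]

theorem fa_eq_iff {A : Type*} (W : ℕ → A) (i j n : ℕ) :
    factorAt W i n = factorAt W j n ↔ ∀ t < n, W (i + t) = W (j + t) := by
  simp [factorAt]

theorem fa_add {A : Type*} (W : ℕ → A) (i a b : ℕ) :
    factorAt W i (a + b) = factorAt W i a ++ factorAt W (i + a) b := by
  simp [factorAt, List.range_add, List.map_map, Function.comp_def, add_assoc]

theorem fa_infix {A : Type*} (W : ℕ → A) (k s m L : ℕ) (h : s + m ≤ L) :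
    factorAt W (k + s) m <:+: factorAt W k L := by
  obtain ⟨c, rfl⟩ := Nat.exists_eq_add_of_le h
  rw [fa_add, fa_add]
  exact ⟨_, _, rfl⟩

theorem fset_eq {A : Type*} (W : ℕ → A) (n : ℕ) :
    {u : List A | u.length = n ∧ IsFactor W u} = Set.range (fun i => factorAt W i n) := by
  ext u
  constructor
  · rintro ⟨rfl, i, hi⟩
    exact ⟨i, hi.symm⟩
  · rintro ⟨i, rfl⟩
    exact ⟨fa_length W i n, i, by simp only [fa_length]⟩

theorem fset_finite {A : Type*} [Fintype A] (W : ℕ → A) (n : ℕ) :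
    (Set.range (fun i => factorAt W i n)).Finite := by
  refine (List.finite_length_eq A n).subset ?_
  rintro _ ⟨i, rfl⟩
  exact fa_length W i n

theorem not_ev_periodic {A : Type*} [Fintype A] (W : ℕ → A)
    (N : ℕ) (hg : ∀ k ≥ N, complexity W (k + 1) = complexity W k + 1)
    (i j : ℕ) (hij : i < j) (h : ∀ t, W (i + t) = W (j + t)) : False := by
  classical
  have h1 : ∀ k, complexity W (N + k) = complexity W N + k := by
    intro k
    induction k with
    | zero => rfl
    | succ k ih =>
      have := hg (N + k) (by omega)
      rw [← add_assoc, this, ih, add_assoc]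
  have h2 : ∀ n, complexity W n ≤ j := by
    intro n
    unfold complexity
    rw [fset_eq]
    have hsub : Set.range (fun i => factorAt W i n) ⊆
        ((Finset.range j).image (fun i => factorAt W i n) : Finset _) := by
      rintro _ ⟨k, rfl⟩
      induction k using Nat.strong_induction_on with
      | _ k ih =>
        by_cases hk : k < j
        · simp only [Finset.coe_image, Finset.coe_range]
          exact ⟨k, hk, rfl⟩
        · have := ih (k - (j - i)) (by omega)
          have e : factorAt W (k - (j - i)) n = factorAt W k n := by
            rw [fa_eq_iff]
            intro t _
            have := h (k - j + t)
            rw [show k - (j - i) + t = i + (k - j + t) by omega,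
              show k + t = j + (k - j + t) by omega, this]
          simpa only [e] using this
    calc _ ≤ Set.ncard (((Finset.range j).image (fun i => factorAt W i n) : Finset _) : Set (List A)) :=
            Set.ncard_le_ncard hsub (Finset.finite_toSet _)
      _ ≤ j := by
        rw [Set.ncard_coe_finset]
        exact Finset.card_image_le.trans (by simp)
  have := h1 (j + 1)
  have := h2 (N + (j + 1))
  omega

theorem fa_take {A : Type*} (W : ℕ → A) (i m : ℕ) :
    (factorAt W i (m + 1)).take m = factorAt W i m := by
  rw [fa_add, List.take_left' (fa_length W i m)]

theorem special_unique {A : Type*} [Fintype A] (W : ℕ → A) (m : ℕ)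
    (hg : complexity W (m + 1) = complexity W m + 1)
    (i i' j j' : ℕ) (hi : factorAt W i m = factorAt W i' m) (hi2 : W (i + m) ≠ W (i' + m))
    (hj : factorAt W j m = factorAt W j' m) (hj2 : W (j + m) ≠ W (j' + m)) :
    factorAt W i m = factorAt W j m := by
  by_contra hne
  have hs : ∀ u ∈ Set.range (fun i => factorAt W i m), ∃ x ∈ Set.range (fun i => factorAt W i (m+1)),
      x.take m = u := by
    rintro _ ⟨k, rfl⟩
    exact ⟨_, ⟨k, rfl⟩, fa_take W k m⟩
  choose! s hs1 hs2 using hs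
  have key : ∀ i i' : ℕ, factorAt W i m = factorAt W i' m → W (i + m) ≠ W (i' + m) →
      ∃ x ∈ Set.range (fun i => factorAt W i (m+1)), x.take m = factorAt W i m ∧
        x ≠ s (factorAt W i m) := by
    intro i i' h h2
    by_cases hc : factorAt W i (m+1) = s (factorAt W i m)
    · refine ⟨_, ⟨i', rfl⟩, (fa_take W i' m).trans h.symm, ?_⟩
      intro he
      have := (fa_eq_iff W i i' (m+1)).1 (hc.trans he.symm) m (by omega)
      exact h2 this
    · exact ⟨_, ⟨i, rfl⟩, fa_take W i m, hc⟩
  obtain ⟨x, hx1, hx2, hx3⟩ := key i i' hi hi2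
  obtain ⟨y, hy1, hy2, hy3⟩ := key j j' hj hj2
  set F := Set.range (fun i => factorAt W i m) with hF
  have hinj : Set.InjOn s F := by
    intro a ha b hb hab
    rw [← hs2 a ha, ← hs2 b hb, hab]
  have hfin : (s '' F).Finite := (fset_finite W m).image s
  have hy4 : y ∉ s '' F := by
    rintro ⟨u, hu, rfl⟩
    rw [hs2 u hu] at hy2
    exact hy3 (by rw [hy2])
  have hx4 : x ∉ insert y (s '' F) := by
    rintro (rfl | ⟨u, hu, rfl⟩)
    · exact hne (hx2.symm.trans hy2)
    · rw [hs2 u hu] at hx2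
      exact hx3 (by rw [hx2])
  have hsub : insert x (insert y (s '' F)) ⊆ Set.range (fun i => factorAt W i (m+1)) := by
    rintro z (rfl | rfl | ⟨u, hu, rfl⟩)
    · exact hx1
    · exact hy1
    · exact hs1 u hu
  have hle := Set.ncard_le_ncard hsub (fset_finite W (m+1))
  rw [Set.ncard_insert_of_notMem hx4 (hfin.insert y), Set.ncard_insert_of_notMem hy4 hfin,
    Set.ncard_image_of_injOn hinj] at hle
  unfold complexity at hg
  rw [fset_eq, fset_eq, ← hF] at hg
  omega

/-- A recurrent word over a finite alphabet whose complexity has minimal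
growth (`T_W(k+1) = T_W(k) + 1` for all large `k`) is uniformly recurrent. -/
theorem minimal_growth_uniformly_recurrent {A : Type*} [Fintype A]
    (W : ℕ → A) (hrec : Recurrent W)
    (hgrowth : ∃ N : ℕ, ∀ k ≥ N, complexity W (k + 1) = complexity W k + 1) :
    UniformlyRecurrent W := by
  refine ⟨hrec, ?_⟩
  obtain ⟨N, hg⟩ := hgrowth
  rintro v ⟨i0, hv⟩
  generalize v.length = n at hv
  by_cases hc : ∃ m ≥ N, ∃ i i', factorAt W i m = factorAt W i' m ∧ W (i + m) ≠ W (i' + m) ∧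
      v <:+: factorAt W i m
  · obtain ⟨m, hm, i, i', h1, h2, h3⟩ := hc
    refine ⟨m + complexity W m, ?_⟩
    rintro w ⟨k, hw⟩ hL
    generalize w.length = L at hw hL
    by_contra hvw
    have hns : ∀ s ≤ complexity W m, ∀ j', factorAt W (k + s) m = factorAt W j' m →
        W (k + s + m) = W (j' + m) := by
      intro s hs j' he
      by_contra hne
      have := special_unique W m (hg m hm) i i' (k+s) j' h1 h2 he hne
      apply hvw
      rw [hw]
      rw [this] at h3
      exact h3.trans (fa_infix W k s m L (by omega))
    obtain ⟨s, hs, s', hs', hlt, he⟩ : ∃ s ≤ complexity W m, ∃ s' ≤ complexity W m, s < s' ∧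
        factorAt W (k + s) m = factorAt W (k + s') m := by
      have hfin := fset_finite W m
      have hcard : hfin.toFinset.card = complexity W m := by
        unfold complexity
        rw [fset_eq, Set.ncard_eq_toFinset_card _ hfin]
      obtain ⟨a, ha, b, hb, hab, hf⟩ := Finset.exists_ne_map_eq_of_card_lt_of_maps_to
        (s := Finset.range (complexity W m + 1)) (t := hfin.toFinset)
        (f := fun s => factorAt W (k + s) m) (by simp [hcard])
        (by intro s _; simp)
      simp only [Finset.mem_range] at ha hb
      rcases lt_or_gt_of_ne hab with h | h
      · exact ⟨a, by omega, b, by omega, h, hf⟩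
      · exact ⟨b, by omega, a, by omega, h, hf.symm⟩
    have main : ∀ t, factorAt W (k + s + t) m = factorAt W (k + s' + t) m ∧
        W (k + s + t + m) = W (k + s' + t + m) := by
      intro t
      induction t using Nat.strong_induction_on with
      | _ t ih =>
        have e1 : factorAt W (k + s + t) m = factorAt W (k + s' + t) m := by
          rcases t with _ | t
          · exact he
          · obtain ⟨p, q⟩ := ih t (by omega)
            rw [fa_eq_iff] at p ⊢
            intro r hr
            by_cases hrm : r + 1 < m
            · have := p (r + 1) hrm
              convert this using 2 <;> omega
            · obtain rfl : m = r + 1 := by omega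
              convert q using 2 <;> omega
        refine ⟨e1, ?_⟩
        -- reduce to a window inside w
        have red : ∀ t' ≤ t, ∃ c ≤ complexity W m,
            factorAt W (k + s + t') m = factorAt W (k + c) m := by
          intro t'
          induction t' using Nat.strong_induction_on with
          | _ t' ih' =>
            intro ht'
            by_cases hh : t' < s' - s
            · exact ⟨s + t', by omega, by rw [add_assoc]⟩
            · obtain ⟨c, hc, h⟩ := ih' (t' - (s' - s)) (by omega) (by omega)
              refine ⟨c, hc, ?_⟩
              rw [← h, (ih (t' - (s' - s)) (by omega)).1]
              congr 1
              omega
        obtain ⟨c, hc, h⟩ := red t le_rfl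
        exact (hns c hc _ h.symm).symm.trans (hns c hc _ (h.symm.trans e1))
    refine not_ev_periodic W N hg (k + s + m) (k + s' + m) (by omega) ?_
    intro t
    have := (main t).2
    convert this using 2 <;> omega
  · exfalso
    push Not at hc
    have hf : IsFactor W (factorAt W i0 (n + N)) := ⟨i0, by simp only [fa_length]⟩
    obtain ⟨j, hj, hlt⟩ := (hrec _ hf).exists_gt i0
    simp only [fa_length, Set.mem_setOf_eq] at hj
    refine not_ev_periodic W N hg i0 j hlt ?_
    intro t
    induction t using Nat.strong_induction_on with
    | _ t ih =>
      by_cases ht : t < n + N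
      · exact ((fa_eq_iff _ _ _ _).1 hj t ht).symm
      · by_contra hne
        refine hc t (by omega) i0 j ((fa_eq_iff _ _ _ _).2 ih) hne ?_
        rw [hv]
        exact fa_infix W i0 0 n t (by omega)
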